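/- If P ∈ 𝒫(Z) is a local maximizer of the function Q ↦ B(Q,ℰ) on 𝒫(Z), then there is a constant c ∈ ℝ such that β_z'(P(z)) − β_z'(Π_P(z)) = c for every z ∈ supp(P). (Here Π_P(z) > 0 for every z ∈ supp(P), so all derivatives are defined.) -/

import Mathlib

/-!
Write `H` for the entropy and `T` for the space of directions along which neither the total mass nor
the moments change; the Bregman family consists of the positive distributions `Q` whose gradient
`β'(Q)` is orthogonal to `T`. If `R - S ∈ T`, then `B(R, Q) - B(S, Q) = H(R) - H(S)` for every such
`Q`, so `H(R) - H(S) ≤ B(R, ℰ)`. Equality holds for `R = P` and `S = Π_P`: move `P` slightly towards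
the uniform distribution `U`. The entropy minimizer `Q` in the fiber of `(1 - ε) P + ε U` belongs to
`ℰ`, because the infinite slope of `β` at `0` keeps it positive, and
`(1 - ε) B(P, Q) + ε B(U, Q) = (1 - ε) H(P) + ε H(U) - H(Q)`; now let `ε → 0` and use compactness.

Consequently, if `v` has total mass zero and is supported in `supp P`, then
`t ↦ H(P + t v) - H(Π_P + t v)` is a differentiable lower bound of `t ↦ B(P + t v, ℰ)`, with
equality at `t = 0`. So it has a local maximum there, and `β'(P) - β'(Π_P)` is orthogonal to `v`.
-/

open Filter Set Topology
open scoped Pointwise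

section OneVariable

theorem strictMonoOn_of_strictConvexOn_of_hasDerivAt {s : Set ℝ} {b b' : ℝ → ℝ}
    (hb : StrictConvexOn ℝ s b) (hd : ∀ x ∈ s, HasDerivAt b (b' x) x) : StrictMonoOn b' s :=
  (hb.strictMonoOn_deriv fun x hx => (hd x hx).differentiableAt).congr fun x hx => (hd x hx).deriv

theorem convexOn_of_convexOn_interior {s : Set ℝ} {b : ℝ → ℝ} (hs : Convex ℝ s)
    (hc : ContinuousOn b s) (hb : ConvexOn ℝ (interior s) b)
    (hd : ∀ x ∈ interior s, DifferentiableAt ℝ b x) : ConvexOn ℝ s b :=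
  MonotoneOn.convexOn_of_deriv hs hc (fun x hx => (hd x hx).differentiableWithinAt)
    (hb.monotoneOn_deriv hd)

theorem add_mul_sub_le_of_convexOn {s : Set ℝ} {b : ℝ → ℝ} {b' p q : ℝ} (hb : ConvexOn ℝ s b)
    (hp : p ∈ s) (hq : q ∈ s) (hd : HasDerivAt b b' q) : b q + b' * (p - q) ≤ b p := by
  rcases lt_trichotomy p q with hpq | rfl | hqp
  · have hslope := hb.slope_le_of_hasDerivAt hp hq hpq hd
    rw [slope_def_field, div_le_iff₀ (sub_pos.2 hpq)] at hslope
    linarith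
  · simp
  · have hslope := hb.le_slope_of_hasDerivAt hq hp hqp hd
    rw [slope_def_field, le_div_iff₀ (sub_pos.2 hqp)] at hslope
    linarith

end OneVariable

variable {Z : Type*} [Fintype Z]

/-- The separable entropy `H(Q) = ∑ z, β_z(Q(z))`. -/
def separableEntropy (β : Z → ℝ → ℝ) (Q : Z → ℝ) : ℝ :=
  ∑ z, β z (Q z)

/-- The Bregman divergence `B(P, Q)` generated by `β`, with `β' z` standing for the derivative of
`β z`. It is meaningful only for `Q` with positive coordinates. -/
def bregmanDiv (β β' : Z → ℝ → ℝ) (P Q : Z → ℝ) : ℝ :=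
  ∑ z, (β z (P z) - β z (Q z) - β' z (Q z) * (P z - Q z))

/-- The distributions that differ from `P` by a direction in `T`: for `T = momentKernel f`, those
with the same moments as `P`. -/
def momentFiber (T : Submodule ℝ (Z → ℝ)) (P : Z → ℝ) : Set (Z → ℝ) :=
  {Q ∈ stdSimplex ℝ Z | Q - P ∈ T}

/-- The Bregman family `ℰ`, described without parameters as the positive distributions at which the
gradient of the entropy is orthogonal to `T`; see `range_eq_bregmanFamily` for the parametrization
by `θ`. -/
def bregmanFamily (β' : Z → ℝ → ℝ) (T : Submodule ℝ (Z → ℝ)) : Set (Z → ℝ) :=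
  {Q ∈ stdSimplex ℝ Z | (∀ z, 0 < Q z) ∧ ∀ v ∈ T, (fun z => β' z (Q z)) ⬝ᵥ v = 0}

/-- The divergence `B(P, ℰ)` of `P` from the Bregman family. -/
noncomputable def bregmanInfDiv (β β' : Z → ℝ → ℝ) (T : Submodule ℝ (Z → ℝ)) (P : Z → ℝ) : ℝ :=
  sInf (bregmanDiv β β' P '' bregmanFamily β' T)

variable {β β' : Z → ℝ → ℝ} {T : Submodule ℝ (Z → ℝ)} {P Q R S v : Z → ℝ}

section Entropy

theorem continuousOn_separableEntropy (hc : ∀ z, ContinuousOn (β z) (Ici 0)) :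
    ContinuousOn (separableEntropy β) (stdSimplex ℝ Z) :=
  continuousOn_finsetSum _ fun z _ =>
    (hc z).comp (continuous_apply z).continuousOn fun _ hQ => hQ.1 z

theorem hasDerivAt_separableEntropy_add_smul (hd : ∀ z x, 0 < x → HasDerivAt (β z) (β' z x) x)
    (hv : ∀ z, v z ≠ 0 → 0 < P z) :
    HasDerivAt (fun t : ℝ => separableEntropy β (P + t • v)) ((fun z => β' z (P z)) ⬝ᵥ v) 0 := by
  refine HasDerivAt.fun_sum fun z _ => ?_
  by_cases hvz : v z = 0
  · simpa [hvz] using hasDerivAt_const (0 : ℝ) (β z (P z))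
  · have hline : HasDerivAt (fun t : ℝ => (P + t • v) z) (v z) 0 := by
      simpa using ((hasDerivAt_id (0 : ℝ)).mul_const (v z)).const_add (P z)
    have hβ : HasDerivAt (β z) (β' z (P z)) ((P + (0 : ℝ) • v) z) := by
      simpa using hd z _ (hv z hvz)
    exact hβ.comp (0 : ℝ) hline

theorem exists_mem_stdSimplex_forall_pos (Z : Type*) [Fintype Z] [Nonempty Z] :
    ∃ U ∈ stdSimplex ℝ Z, ∀ z, 0 < U z :=
  ⟨_, stdSimplex.barycenter.2, fun z => by
    rw [stdSimplex.barycenter_apply]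
    positivity⟩

theorem eventually_add_smul_mem_stdSimplex (hP : P ∈ stdSimplex ℝ Z) (hsum : ∑ z, v z = 0)
    (hv : ∀ z, v z ≠ 0 → 0 < P z) : ∀ᶠ t : ℝ in 𝓝 0, P + t • v ∈ stdSimplex ℝ Z := by
  have hnonneg : ∀ᶠ t : ℝ in 𝓝 0, ∀ z, 0 ≤ (P + t • v) z := by
    refine eventually_all.2 fun z => ?_
    by_cases hvz : v z = 0
    · simp [hvz, hP.1 z]
    · have hcont : Continuous fun t : ℝ => (P + t • v) z := by fun_prop
      exact (hcont.tendsto 0).eventually_const_le (by simpa using hv z hvz)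
  filter_upwards [hnonneg] with t ht
  exact ⟨ht, by simp [Finset.sum_add_distrib, ← Finset.mul_sum, hsum, hP.2]⟩

end Entropy

section Minimizers

theorem separableEntropy_sub_le_of_eq_zero [DecidableEq Z] (hb : ∀ z, ConvexOn ℝ (Ici 0) (β z))
    (hd : ∀ z x, 0 < x → HasDerivAt (β z) (β' z x) x) (hP : ∀ z, 0 ≤ P z) (hQ : ∀ z, 0 ≤ Q z)
    {z : Z} (hPz : 0 < P z) (hQz : Q z = 0) {t : ℝ} (ht0 : 0 < t) (ht1 : t ≤ 1) :
    separableEntropy β ((1 - t) • Q + t • P) - separableEntropy β Q ≤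
      t * (β' z (t * P z) * P z + ∑ y ∈ Finset.univ.erase z, (β y (P y) - β y (Q y))) := by
  have hz : β z (t * P z) - β z 0 ≤ t * (β' z (t * P z) * P z) := by
    have htangent := add_mul_sub_le_of_convexOn (hb z) self_mem_Ici (mul_pos ht0 hPz).le
      (hd z _ (mul_pos ht0 hPz))
    linarith
  have hother : ∀ y, β y (((1 - t) • Q + t • P) y) - β y (Q y) ≤ t * (β y (P y) - β y (Q y)) := by
    intro y
    have hchord := (hb y).2 (hQ y) (hP y) (sub_nonneg.2 ht1) ht0.le (sub_add_cancel 1 t)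
    simp only [Pi.add_apply, Pi.smul_apply, smul_eq_mul] at hchord ⊢
    linarith
  calc separableEntropy β ((1 - t) • Q + t • P) - separableEntropy β Q
      = (β z (t * P z) - β z 0) +
          ∑ y ∈ Finset.univ.erase z, (β y (((1 - t) • Q + t • P) y) - β y (Q y)) := by
        rw [separableEntropy, separableEntropy, ← Finset.sum_sub_distrib,
          ← Finset.add_sum_erase _ _ (Finset.mem_univ z)]
        simp [hQz]
    _ ≤ t * (β' z (t * P z) * P z) + ∑ y ∈ Finset.univ.erase z, t * (β y (P y) - β y (Q y)) :=
        add_le_add hz (Finset.sum_le_sum fun y _ => hother y)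
    _ = _ := by rw [← Finset.mul_sum, mul_add]

theorem pos_of_isMinOn_separableEntropy {K : Set (Z → ℝ)} (hK : Convex ℝ K)
    (hK0 : ∀ R ∈ K, ∀ z, 0 ≤ R z) (hb : ∀ z, ConvexOn ℝ (Ici 0) (β z))
    (hd : ∀ z x, 0 < x → HasDerivAt (β z) (β' z x) x)
    (hbot : ∀ z, Tendsto (β' z) (𝓝[>] 0) atBot) (hQ : Q ∈ K)
    (hmin : IsMinOn (separableEntropy β) K Q) (hP : P ∈ K) {z : Z} (hPz : 0 < P z) :
    0 < Q z := by
  classical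
  by_contra hneg
  have hQz : Q z = 0 := le_antisymm (not_lt.1 hneg) (hK0 Q hQ z)
  set C := ∑ y ∈ Finset.univ.erase z, (β y (P y) - β y (Q y))
  have hslope_nonneg : ∀ t ∈ Ioo (0 : ℝ) 1, 0 ≤ β' z (t * P z) * P z + C := by
    intro t ⟨ht0, ht1⟩
    refine nonneg_of_mul_nonneg_right (le_trans ?_
      (separableEntropy_sub_le_of_eq_zero hb hd (hK0 P hP) (hK0 Q hQ) hPz hQz ht0 ht1.le)) ht0
    exact sub_nonneg.2 (hmin (hK hQ hP (sub_nonneg.2 ht1.le) ht0.le (sub_add_cancel 1 t)))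
  have hscale : Tendsto (fun t : ℝ => t * P z) (𝓝[>] 0) (𝓝[>] 0) :=
    tendsto_nhdsWithin_iff.2
      ⟨((continuous_mul_const (P z)).tendsto' 0 0 (by simp)).mono_left nhdsWithin_le_nhds,
        eventually_mem_nhdsWithin.mono fun t ht => mul_pos ht hPz⟩
  have hslope : Tendsto (fun t : ℝ => β' z (t * P z) * P z + C) (𝓝[>] 0) atBot :=
    tendsto_atBot_add_const_right _ C (((hbot z).comp hscale).atBot_mul_const hPz)
  obtain ⟨t, hlt, ht⟩ :=
    ((hslope.eventually_lt_atBot 0).and (Ioo_mem_nhdsGT (zero_lt_one' ℝ))).exists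
  exact (hslope_nonneg t ht).not_gt hlt

theorem convex_momentFiber : Convex ℝ (momentFiber T P) :=
  (convex_stdSimplex ℝ Z).inter <| by
    simp only [sub_eq_add_neg]
    exact T.convex.translate_preimage_left (-P)

theorem isCompact_momentFiber : IsCompact (momentFiber T P) :=
  (isCompact_stdSimplex ℝ Z).inter_right
    (T.closed_of_finiteDimensional.preimage (continuous_sub_right P))

theorem self_mem_momentFiber (hP : P ∈ stdSimplex ℝ Z) : P ∈ momentFiber T P :=
  ⟨hP, by simp⟩

theorem mem_bregmanFamily_of_isMinOn (hd : ∀ z x, 0 < x → HasDerivAt (β z) (β' z x) x)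
    (hT : ∀ v ∈ T, ∑ z, v z = 0) (hQ : Q ∈ momentFiber T P) (hQpos : ∀ z, 0 < Q z)
    (hmin : IsMinOn (separableEntropy β) (momentFiber T P) Q) : Q ∈ bregmanFamily β' T := by
  refine ⟨hQ.1, hQpos, fun v hv => ?_⟩
  refine IsLocalMin.hasDerivAt_eq_zero ?_
    (hasDerivAt_separableEntropy_add_smul hd fun z _ => hQpos z)
  filter_upwards [eventually_add_smul_mem_stdSimplex hQ.1 (hT v hv) fun z _ => hQpos z] with t ht
  have hmem : Q + t • v - P ∈ T := by
    rw [add_sub_right_comm]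
    exact T.add_mem hQ.2 (T.smul_mem t hv)
  simpa using hmin ⟨ht, hmem⟩

theorem exists_mem_bregmanFamily_sub_mem (hc : ∀ z, ContinuousOn (β z) (Ici 0))
    (hb : ∀ z, ConvexOn ℝ (Ici 0) (β z)) (hd : ∀ z x, 0 < x → HasDerivAt (β z) (β' z x) x)
    (hbot : ∀ z, Tendsto (β' z) (𝓝[>] 0) atBot) (hT : ∀ v ∈ T, ∑ z, v z = 0)
    (hP : P ∈ stdSimplex ℝ Z) (hPpos : ∀ z, 0 < P z) : ∃ Q ∈ bregmanFamily β' T, Q - P ∈ T := by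
  obtain ⟨Q, hQ, hmin⟩ := isCompact_momentFiber.exists_isMinOn ⟨P, self_mem_momentFiber (T := T) hP⟩
    ((continuousOn_separableEntropy hc).mono fun _ hR => hR.1)
  have hQpos : ∀ z, 0 < Q z := fun z =>
    pos_of_isMinOn_separableEntropy convex_momentFiber (fun R hR => hR.1.1) hb hd hbot hQ hmin
      (self_mem_momentFiber hP) (hPpos z)
  exact ⟨Q, mem_bregmanFamily_of_isMinOn hd hT hQ hQpos hmin, hQ.2⟩

theorem nonempty_bregmanFamily [Nonempty Z] (hc : ∀ z, ContinuousOn (β z) (Ici 0))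
    (hb : ∀ z, ConvexOn ℝ (Ici 0) (β z)) (hd : ∀ z x, 0 < x → HasDerivAt (β z) (β' z x) x)
    (hbot : ∀ z, Tendsto (β' z) (𝓝[>] 0) atBot) (hT : ∀ v ∈ T, ∑ z, v z = 0) :
    (bregmanFamily β' T).Nonempty := by
  obtain ⟨U, hU, hUpos⟩ := exists_mem_stdSimplex_forall_pos Z
  obtain ⟨Q, hQ, -⟩ := exists_mem_bregmanFamily_sub_mem hc hb hd hbot hT hU hUpos
  exact ⟨Q, hQ⟩

-- Lower semicontinuity of the minimal entropy: `K + T` is closed for the compact sublevel set `K`.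
theorem eventually_forall_momentFiber_lt_separableEntropy
    (hc : ∀ z, ContinuousOn (β z) (Ici 0)) {c : ℝ}
    (hlt : ∀ Q ∈ momentFiber T P, c < separableEntropy β Q) :
    ∀ᶠ R in 𝓝 P, ∀ Q ∈ momentFiber T R, c < separableEntropy β Q := by
  set K := stdSimplex ℝ Z ∩ separableEntropy β ⁻¹' Iic c
  have hK : IsCompact K := (isCompact_stdSimplex ℝ Z).of_isClosed_subset
    ((continuousOn_separableEntropy hc).preimage_isClosed_of_isClosed
      (isClosed_stdSimplex ℝ Z) isClosed_Iic) inter_subset_left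
  have hclosed : IsClosed (K + (T : Set (Z → ℝ))) :=
    T.closed_of_finiteDimensional.add_left_of_isCompact hK
  have hP : P ∉ K + (T : Set (Z → ℝ)) := by
    rintro ⟨Q, hQ, w, hw, rfl⟩
    exact (hlt Q ⟨hQ.1, by simpa using hw⟩).not_ge hQ.2
  filter_upwards [hclosed.isOpen_compl.mem_nhds hP] with R hR Q hQ
  by_contra hle
  exact hR ⟨Q, ⟨hQ.1, not_lt.1 hle⟩, R - Q, by simpa using T.neg_mem hQ.2, by simp⟩

end Minimizers

section Duality

theorem bregmanDiv_eq (β β' : Z → ℝ → ℝ) (P Q : Z → ℝ) :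
    bregmanDiv β β' P Q =
      separableEntropy β P - separableEntropy β Q - (fun z => β' z (Q z)) ⬝ᵥ (P - Q) := by
  simp only [bregmanDiv, separableEntropy, dotProduct, Finset.sum_sub_distrib, Pi.sub_apply]

theorem bregmanDiv_nonneg (hb : ∀ z, ConvexOn ℝ (Ici 0) (β z))
    (hd : ∀ z x, 0 < x → HasDerivAt (β z) (β' z x) x) (hP : ∀ z, 0 ≤ P z) (hQ : ∀ z, 0 < Q z) :
    0 ≤ bregmanDiv β β' P Q := by
  refine Finset.sum_nonneg fun z _ => ?_
  have := add_mul_sub_le_of_convexOn (hb z) (hP z) (hQ z).le (hd z _ (hQ z))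
  linarith

theorem bregmanDiv_sub_bregmanDiv (hQ : Q ∈ bregmanFamily β' T) (hRS : R - S ∈ T) :
    bregmanDiv β β' R Q - bregmanDiv β β' S Q = separableEntropy β R - separableEntropy β S := by
  have horth := hQ.2.2 _ hRS
  rw [bregmanDiv_eq, bregmanDiv_eq]
  simp only [dotProduct_sub] at horth ⊢
  linarith

theorem mul_bregmanDiv_add_mul_bregmanDiv (hQ : Q ∈ bregmanFamily β' T) {a b : ℝ} (hab : a + b = 1)
    (hmem : Q - (a • P + b • R) ∈ T) :
    a * bregmanDiv β β' P Q + b * bregmanDiv β β' R Q =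
      a * separableEntropy β P + b * separableEntropy β R - separableEntropy β Q := by
  have horth := hQ.2.2 _ hmem
  obtain rfl : a = 1 - b := by linarith
  rw [bregmanDiv_eq, bregmanDiv_eq]
  simp only [dotProduct_sub, dotProduct_add, dotProduct_smul, smul_eq_mul] at horth ⊢
  linear_combination horth

theorem separableEntropy_sub_le_bregmanDiv (hb : ∀ z, ConvexOn ℝ (Ici 0) (β z))
    (hd : ∀ z x, 0 < x → HasDerivAt (β z) (β' z x) x) (hS : ∀ z, 0 ≤ S z)
    (hQ : Q ∈ bregmanFamily β' T) (hRS : R - S ∈ T) :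
    separableEntropy β R - separableEntropy β S ≤ bregmanDiv β β' R Q := by
  rw [← bregmanDiv_sub_bregmanDiv hQ hRS]
  exact sub_le_self _ (bregmanDiv_nonneg hb hd hS hQ.2.1)

theorem separableEntropy_sub_le_bregmanInfDiv (hb : ∀ z, ConvexOn ℝ (Ici 0) (β z))
    (hd : ∀ z x, 0 < x → HasDerivAt (β z) (β' z x) x) (hne : (bregmanFamily β' T).Nonempty)
    (hS : ∀ z, 0 ≤ S z) (hRS : R - S ∈ T) :
    separableEntropy β R - separableEntropy β S ≤ bregmanInfDiv β β' T R :=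
  le_csInf (hne.image _) <| forall_mem_image.2 fun _ hQ =>
    separableEntropy_sub_le_bregmanDiv hb hd hS hQ hRS

theorem lowerBound_le_of_lt_separableEntropy [Nonempty Z] (hc : ∀ z, ContinuousOn (β z) (Ici 0))
    (hb : ∀ z, ConvexOn ℝ (Ici 0) (β z)) (hd : ∀ z x, 0 < x → HasDerivAt (β z) (β' z x) x)
    (hbot : ∀ z, Tendsto (β' z) (𝓝[>] 0) atBot) (hT : ∀ v ∈ T, ∑ z, v z = 0)
    (hP : P ∈ stdSimplex ℝ Z) {c m : ℝ} (hlt : ∀ Q ∈ momentFiber T P, c < separableEntropy β Q)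
    (hm : m ∈ lowerBounds (bregmanDiv β β' P '' bregmanFamily β' T)) :
    m ≤ separableEntropy β P - c := by
  obtain ⟨U, hU, hUpos⟩ := exists_mem_stdSimplex_forall_pos Z
  have hcont : Continuous fun ε : ℝ => (1 - ε) • P + ε • U := by fun_prop
  have hfiber : ∀ᶠ ε : ℝ in 𝓝[>] 0,
      ∀ Q ∈ momentFiber T ((1 - ε) • P + ε • U), c < separableEntropy β Q :=
    ((hcont.tendsto' 0 P (by simp)).mono_left nhdsWithin_le_nhds).eventually
      (eventually_forall_momentFiber_lt_separableEntropy hc hlt)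
  have hbound : ∀ᶠ ε : ℝ in 𝓝[>] 0,
      (1 - ε) * m ≤ (1 - ε) * separableEntropy β P + ε * separableEntropy β U - c := by
    filter_upwards [hfiber, Ioo_mem_nhdsGT (zero_lt_one' ℝ)] with ε hε ⟨hε0, hε1⟩
    have hmix : (1 - ε) • P + ε • U ∈ stdSimplex ℝ Z :=
      convex_stdSimplex ℝ Z hP hU (sub_nonneg.2 hε1.le) hε0.le (by ring)
    have hmixpos : ∀ z, 0 < ((1 - ε) • P + ε • U) z := fun z =>
      add_pos_of_nonneg_of_pos (mul_nonneg (sub_nonneg.2 hε1.le) (hP.1 z)) (mul_pos hε0 (hUpos z))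
    obtain ⟨Q, hQ, hQmem⟩ := exists_mem_bregmanFamily_sub_mem hc hb hd hbot hT hmix hmixpos
    have hmQ := mul_le_mul_of_nonneg_left (hm (mem_image_of_mem _ hQ)) (sub_nonneg.2 hε1.le)
    have hUQ := mul_nonneg hε0.le (bregmanDiv_nonneg hb hd hU.1 hQ.2.1)
    have hidentity := mul_bregmanDiv_add_mul_bregmanDiv (β := β) hQ (sub_add_cancel 1 ε) hQmem
    have hcQ := hε Q ⟨hQ.1, hQmem⟩
    linarith
  refine le_of_tendsto_of_tendsto ?_ ?_ hbound
  · exact (Continuous.tendsto' (by fun_prop) 0 m (by simp)).mono_left nhdsWithin_le_nhds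
  · exact (Continuous.tendsto' (by fun_prop) 0 _ (by simp)).mono_left nhdsWithin_le_nhds

theorem bregmanInfDiv_eq [Nonempty Z] (hc : ∀ z, ContinuousOn (β z) (Ici 0))
    (hb : ∀ z, ConvexOn ℝ (Ici 0) (β z)) (hd : ∀ z x, 0 < x → HasDerivAt (β z) (β' z x) x)
    (hbot : ∀ z, Tendsto (β' z) (𝓝[>] 0) atBot) (hT : ∀ v ∈ T, ∑ z, v z = 0)
    (hP : P ∈ stdSimplex ℝ Z) (hQ : Q ∈ momentFiber T P)
    (hmin : IsMinOn (separableEntropy β) (momentFiber T P) Q) :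
    bregmanInfDiv β β' T P = separableEntropy β P - separableEntropy β Q := by
  have hPQ : P - Q ∈ T := by simpa using T.neg_mem hQ.2
  refine IsGLB.csInf_eq ⟨?_, fun m hm => ?_⟩
    ((nonempty_bregmanFamily hc hb hd hbot hT).image _)
  · exact forall_mem_image.2 fun _ hR => separableEntropy_sub_le_bregmanDiv hb hd hQ.1.1 hR hPQ
  · refine le_sub_comm.1 (le_of_forall_lt_imp_le_of_dense fun c hcQ => le_sub_comm.1 ?_)
    exact lowerBound_le_of_lt_separableEntropy hc hb hd hbot hT hP
      (fun R hR => hcQ.trans_le (hmin hR)) hm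

end Duality

section LocalMaximizers

theorem dotProduct_eq_of_isLocalMaxOn_bregmanInfDiv [Nonempty Z]
    (hc : ∀ z, ContinuousOn (β z) (Ici 0)) (hb : ∀ z, ConvexOn ℝ (Ici 0) (β z))
    (hd : ∀ z x, 0 < x → HasDerivAt (β z) (β' z x) x)
    (hbot : ∀ z, Tendsto (β' z) (𝓝[>] 0) atBot) (hT : ∀ v ∈ T, ∑ z, v z = 0)
    (hP : P ∈ stdSimplex ℝ Z) (hmax : IsLocalMaxOn (bregmanInfDiv β β' T) (stdSimplex ℝ Z) P)
    (hQ : Q ∈ momentFiber T P) (hmin : IsMinOn (separableEntropy β) (momentFiber T P) Q)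
    (hsum : ∑ z, v z = 0) (hvP : ∀ z, v z ≠ 0 → 0 < P z) (hvQ : ∀ z, v z ≠ 0 → 0 < Q z) :
    (fun z => β' z (P z)) ⬝ᵥ v = (fun z => β' z (Q z)) ⬝ᵥ v := by
  have hmemP := eventually_add_smul_mem_stdSimplex hP hsum hvP
  have htendsto : Tendsto (fun t : ℝ => P + t • v) (𝓝 0) (𝓝[stdSimplex ℝ Z] P) :=
    tendsto_nhdsWithin_iff.2 ⟨Continuous.tendsto' (by fun_prop) 0 P (by simp), hmemP⟩
  have hlocmax : IsLocalMax
      (fun t : ℝ => separableEntropy β (P + t • v) - separableEntropy β (Q + t • v)) 0 := by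
    filter_upwards [eventually_add_smul_mem_stdSimplex hQ.1 hsum hvQ, htendsto.eventually hmax]
      with t hQt hPt
    calc separableEntropy β (P + t • v) - separableEntropy β (Q + t • v)
        ≤ bregmanInfDiv β β' T (P + t • v) :=
          separableEntropy_sub_le_bregmanInfDiv hb hd (nonempty_bregmanFamily hc hb hd hbot hT)
            hQt.1 (by simpa using T.neg_mem hQ.2)
      _ ≤ bregmanInfDiv β β' T P := hPt
      _ = separableEntropy β (P + (0 : ℝ) • v) - separableEntropy β (Q + (0 : ℝ) • v) := by
          simpa using bregmanInfDiv_eq hc hb hd hbot hT hP hQ hmin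
  exact sub_eq_zero.1 (hlocmax.hasDerivAt_eq_zero
    ((hasDerivAt_separableEntropy_add_smul hd hvP).sub
      (hasDerivAt_separableEntropy_add_smul hd hvQ)))

theorem exists_eq_const_of_forall_dotProduct_eq_zero {g : Z → ℝ} {s : Set Z}
    (hg : ∀ v : Z → ℝ, ∑ z, v z = 0 → (∀ z, v z ≠ 0 → z ∈ s) → g ⬝ᵥ v = 0) :
    ∃ c, ∀ z ∈ s, g z = c := by
  classical
  rcases s.eq_empty_or_nonempty with rfl | ⟨a, ha⟩
  · simp
  refine ⟨g a, fun z hz => ?_⟩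
  have hdiff := hg (Pi.single z 1 - Pi.single a 1) (by simp) fun y hy => by
    by_contra hys
    have hyz : y ≠ z := fun h => hys (h ▸ hz)
    have hya : y ≠ a := fun h => hys (h ▸ ha)
    simp [hyz, hya] at hy
  simpa [dotProduct_sub, sub_eq_zero] using hdiff

theorem exists_deriv_sub_eq_of_isLocalMaxOn_bregmanInfDiv [Nonempty Z]
    (hc : ∀ z, ContinuousOn (β z) (Ici 0)) (hb : ∀ z, ConvexOn ℝ (Ici 0) (β z))
    (hd : ∀ z x, 0 < x → HasDerivAt (β z) (β' z x) x)
    (hbot : ∀ z, Tendsto (β' z) (𝓝[>] 0) atBot) (hT : ∀ v ∈ T, ∑ z, v z = 0)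
    (hP : P ∈ stdSimplex ℝ Z) (hmax : IsLocalMaxOn (bregmanInfDiv β β' T) (stdSimplex ℝ Z) P)
    (hQ : Q ∈ momentFiber T P) (hmin : IsMinOn (separableEntropy β) (momentFiber T P) Q) :
    ∃ c, ∀ z, 0 < P z → 0 < Q z ∧ β' z (P z) - β' z (Q z) = c := by
  have hpos : ∀ z, 0 < P z → 0 < Q z := fun z =>
    pos_of_isMinOn_separableEntropy convex_momentFiber (fun R hR => hR.1.1) hb hd hbot hQ hmin
      (self_mem_momentFiber hP)
  obtain ⟨c, hconst⟩ := exists_eq_const_of_forall_dotProduct_eq_zero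
    (g := (fun z => β' z (P z)) - fun z => β' z (Q z)) (s := {z | 0 < P z}) fun v hsum hv => by
      rw [sub_dotProduct, sub_eq_zero]
      exact dotProduct_eq_of_isLocalMaxOn_bregmanInfDiv hc hb hd hbot hT hP hmax hQ hmin hsum hv
        fun z hz => hpos z (hv z hz)
  exact ⟨c, fun z hz => ⟨hpos z hz, hconst z hz⟩⟩

end LocalMaximizers

section Parametrization

variable {M ι : Type*} [AddCommGroup M] [Module ℝ M] [Fintype ι]

/-- The directions along which neither the total mass nor the moment `∑ z, v z • f z` changes. -/
def momentKernel (f : Z → M) : Submodule ℝ (Z → ℝ) :=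
  LinearMap.ker (Fintype.linearCombination ℝ fun z => ((1 : ℝ), f z))

theorem mem_momentKernel {f : Z → M} :
    v ∈ momentKernel f ↔ ∑ z, v z = 0 ∧ ∑ z, v z • f z = 0 := by
  simp [momentKernel, Fintype.linearCombination_apply, Prod.ext_iff, Prod.fst_sum, Prod.snd_sum]

theorem mem_momentFiber_momentKernel {f : Z → M} (hP : P ∈ stdSimplex ℝ Z) :
    Q ∈ momentFiber (momentKernel f) P ↔
      Q ∈ stdSimplex ℝ Z ∧ ∑ z, Q z • f z = ∑ z, P z • f z := by
  refine and_congr_right fun hQ => ?_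
  simp [mem_momentKernel, sub_smul, hQ.2, hP.2, sub_eq_zero]

theorem forall_mem_momentKernel_dotProduct_eq_zero_iff {f : Z → ι → ℝ} {g : Z → ℝ} :
    (∀ v ∈ momentKernel f, g ⬝ᵥ v = 0) ↔ ∃ (θ : ι → ℝ) (r : ℝ), ∀ z, g z = θ ⬝ᵥ f z - r := by
  classical
  constructor
  · intro hg
    have hannih : Fintype.linearCombination ℝ g ∈ (momentKernel f).dualAnnihilator :=
      (Submodule.mem_dualAnnihilator _).2 fun v hv => by
        simpa [Fintype.linearCombination_apply, dotProduct, mul_comm] using hg v hv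
    rw [momentKernel, ← LinearMap.range_dualMap_eq_dualAnnihilator_ker] at hannih
    obtain ⟨φ, hφ⟩ := hannih
    refine ⟨fun i => φ (0, fun j => if i = j then 1 else 0), -φ (1, 0), fun z => ?_⟩
    calc g z = φ (1, f z) := by simpa using (LinearMap.congr_fun hφ (Pi.single z 1)).symm
      _ = φ (1, 0) + (φ ∘ₗ LinearMap.inr ℝ ℝ (ι → ℝ)) (f z) := by simp [← map_add]
      _ = _ := by
        rw [LinearMap.pi_apply_eq_sum_univ]
        simp [dotProduct, mul_comm, add_comm]
  · rintro ⟨θ, r, hg⟩ v hv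
    obtain ⟨hsum, hmom⟩ := mem_momentKernel.1 hv
    calc g ⬝ᵥ v = ∑ z, (θ ⬝ᵥ f z - r) * v z := by simp only [dotProduct, hg]
      _ = θ ⬝ᵥ ∑ z, v z • f z - r * ∑ z, v z := by
        simp only [dotProduct_sum, dotProduct_smul, smul_eq_mul, Finset.mul_sum,
          ← Finset.sum_sub_distrib]
        exact Finset.sum_congr rfl fun z _ => by ring
      _ = 0 := by simp [hsum, hmom]

theorem injective_sum_comp_sub [Nonempty Z] {e : Z → ℝ → ℝ} (he : ∀ z, StrictMono (e z))
    (a : Z → ℝ) : Function.Injective fun r => ∑ z, e z (a z - r) :=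
  StrictAnti.injective fun _ _ hrs =>
    Finset.sum_lt_sum_of_nonempty Finset.univ_nonempty fun z _ => he z (sub_lt_sub_left hrs _)

theorem range_eq_bregmanFamily [Nonempty Z] {e : Z → ℝ → ℝ}
    (hmono : ∀ z, StrictMonoOn (β' z) (Ioi 0)) (he_pos : ∀ z r, 0 < e z r)
    (he_left : ∀ z r, β' z (e z r) = r) (he_right : ∀ z x, 0 < x → e z (β' z x) = x)
    {f : Z → ι → ℝ} {Λ : (ι → ℝ) → ℝ} (hΛ : ∀ θ, ∑ z, e z (θ ⬝ᵥ f z - Λ θ) = 1) :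
    range (fun θ z => e z (θ ⬝ᵥ f z - Λ θ)) = bregmanFamily β' (momentKernel f) := by
  have he : ∀ z, StrictMono (e z) := fun z r s hrs =>
    ((hmono z).lt_iff_lt (he_pos z r) (he_pos z s)).1 (by simpa only [he_left] using hrs)
  ext Q
  constructor
  · rintro ⟨θ, rfl⟩
    exact ⟨⟨fun z => (he_pos z _).le, hΛ θ⟩, fun z => he_pos z _,
      forall_mem_momentKernel_dotProduct_eq_zero_iff.2 ⟨θ, Λ θ, fun z => he_left z _⟩⟩
  · rintro ⟨hQ, hQpos, horth⟩
    obtain ⟨θ, r, hθ⟩ := forall_mem_momentKernel_dotProduct_eq_zero_iff.1 horth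
    have hQe : ∀ z, e z (θ ⬝ᵥ f z - r) = Q z := fun z => by rw [← hθ z, he_right z _ (hQpos z)]
    obtain rfl : Λ θ = r := injective_sum_comp_sub he (fun z => θ ⬝ᵥ f z) <| by
      simp only [hΛ, hQe, hQ.2]
    exact ⟨θ, funext hQe⟩

end Parametrization

theorem stmt_10 {Z : Type} [Fintype Z] [Nonempty Z] {d : ℕ}
    (β β' : Z → ℝ → ℝ)
    (hβc : ∀ z, ContinuousOn (β z) (Set.Ici 0))
    (hβsc : ∀ z, StrictConvexOn ℝ (Set.Ioi 0) (β z))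
    (hβd : ∀ z x, 0 < x → HasDerivAt (β z) (β' z x) x)
    (hβ'bot : ∀ z, Filter.Tendsto (β' z) (nhdsWithin 0 (Set.Ioi 0)) Filter.atBot)
    (hβ'top : ∀ z, Filter.Tendsto (β' z) Filter.atTop Filter.atTop)
    (e : Z → ℝ → ℝ)
    (he_pos : ∀ z r, 0 < e z r)
    (he_left : ∀ z r, β' z (e z r) = r)
    (he_right : ∀ z x, 0 < x → e z (β' z x) = x)
    (f : Z → Fin d → ℝ)
    (prob : Set (Z → ℝ))
    (hprob : prob = {P : Z → ℝ | (∀ z, 0 ≤ P z) ∧ (∑ z, P z) = 1})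
    (μ : (Z → ℝ) → Fin d → ℝ)
    (hμ : ∀ P i, μ P i = ∑ z, P z * f z i)
    (H : (Z → ℝ) → ℝ)
    (hH : ∀ Q, H Q = ∑ z, β z (Q z))
    (Λ : (Fin d → ℝ) → ℝ)
    (hΛ : ∀ θ, (∑ z, e z ((∑ i, θ i * f z i) - Λ θ)) = 1)
    (Pθ : (Fin d → ℝ) → Z → ℝ)
    (hPθ : ∀ θ z, Pθ θ z = e z ((∑ i, θ i * f z i) - Λ θ))
    (Bdiv : (Z → ℝ) → (Z → ℝ) → ℝ)
    (hBdiv : ∀ P Q, Bdiv P Q = ∑ z, (β z (P z) - β z (Q z) - β' z (Q z) * (P z - Q z)))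
    (BE : (Z → ℝ) → ℝ)
    (hBE : ∀ P, BE P = ⨅ θ, Bdiv P (Pθ θ))
    (Pr : (Z → ℝ) → Z → ℝ)
    (hPr : ∀ P ∈ prob, Pr P ∈ prob ∧ μ (Pr P) = μ P ∧
      (∀ Q ∈ prob, μ Q = μ P → H (Pr P) ≤ H Q) ∧
      (∀ Q ∈ prob, μ Q = μ P → H Q = H (Pr P) → Q = Pr P))
    (P : Z → ℝ) (hP : P ∈ prob)
    (hmax : IsLocalMaxOn BE prob P) :
    ∃ c : ℝ, ∀ z : Z, 0 < P z → 0 < Pr P z ∧ β' z (P z) - β' z (Pr P z) = c := by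
  obtain rfl : prob = stdSimplex ℝ Z := hprob
  obtain rfl : H = separableEntropy β := funext hH
  obtain rfl : Bdiv = bregmanDiv β β' := funext₂ hBdiv
  obtain rfl : μ = fun R => ∑ z, R z • f z := by
    ext R i
    simp [hμ]
  obtain rfl : Pθ = fun θ z => e z (θ ⬝ᵥ f z - Λ θ) := funext₂ hPθ
  have hconv : ∀ z, ConvexOn ℝ (Ici 0) (β z) := fun z =>
    convexOn_of_convexOn_interior (convex_Ici 0) (hβc z) (by simpa using (hβsc z).convexOn)
      fun x hx => (hβd z x (by simpa using hx)).differentiableAt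
  have hmono : ∀ z, StrictMonoOn (β' z) (Ioi 0) := fun z =>
    strictMonoOn_of_strictConvexOn_of_hasDerivAt (hβsc z) (hβd z)
  obtain rfl : BE = bregmanInfDiv β β' (momentKernel f) := by
    ext R
    rw [hBE, iInf, bregmanInfDiv, ← range_eq_bregmanFamily hmono he_pos he_left he_right hΛ,
      ← range_comp]
    rfl
  obtain ⟨hPr_mem, hPrμ, hPrmin, -⟩ := hPr P hP
  exact exists_deriv_sub_eq_of_isLocalMaxOn_bregmanInfDiv hβc hconv hβd hβ'bot
    (fun v hv => (mem_momentKernel.1 hv).1) hP hmax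
    ((mem_momentFiber_momentKernel hP).2 ⟨hPr_mem, hPrμ⟩)
    fun Q hQ => ((mem_momentFiber_momentKernel hP).1 hQ).elim (hPrmin Q)
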